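/- Under κ-uniform convexity of the energy, there exists m ∈ ℕ, independent of the step size τ (one may take m = ⌈|ℓ|_Lip/κ⌉ + 1), such that for every iteration index k < N̂(τ) there exists an index k̂ ∈ [k, k+m] with 0 ∈ ∂R(0) + D_zI(t_{k̂−1}, z_{k̂}); that is, after at most m iterations the iterate is again locally stable. -/

import Mathlib

open MeasureTheory
open scoped RealInnerProductSpace NNReal

noncomputable section

namespace RIS

variable {Z V X : Type*}
  [NormedAddCommGroup Z] [InnerProductSpace ℝ Z] [CompleteSpace Z]
  [NormedAddCommGroup V] [InnerProductSpace ℝ V] [CompleteSpace V]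
  [NormedAddCommGroup X] [NormedSpace ℝ X]

/-- The convex subdifferential of `R : V → ℝ` at `u`, as a subset of the dual `V →L[ℝ] ℝ`. -/
def subdiff (R : V → ℝ) (u : V) : Set (V →L[ℝ] ℝ) :=
  {ξ | ∀ v : V, R u + ξ (v - u) ≤ R v}

/-- The semilinear energy `I(t,z) = ½⟨Az,z⟩ + F(z) − ⟨ℓ(t), z⟩`. -/
def energy (A : Z →L[ℝ] Z →L[ℝ] ℝ) (F : Z → ℝ) (ℓ : ℝ → V →L[ℝ] ℝ)
    (ι : Z →L[ℝ] V) (t : ℝ) (z : Z) : ℝ :=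
  (1 / 2 : ℝ) * A z z + F z - ℓ t (ι z)

/-- `D_z I(t,z) = Az + D_zF(z) − ℓ(t)`, as an element of `Z*` (here `D_zF(z)` and `ℓ(t)`
are elements of `V*`, composed with the embedding `ι : Z ↪ V`). -/
def DI (A : Z →L[ℝ] Z →L[ℝ] ℝ) (DF : Z → V →L[ℝ] ℝ) (ℓ : ℝ → V →L[ℝ] ℝ)
    (ι : Z →L[ℝ] V) (t : ℝ) (z : Z) : Z →L[ℝ] ℝ :=
  A z + (DF z).comp ι - (ℓ t).comp ι

/-- Local stability: `0 ∈ ∂R(0) + D_z I(t,z)`. -/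
def LocStable (R : V → ℝ) (A : Z →L[ℝ] Z →L[ℝ] ℝ) (DF : Z → V →L[ℝ] ℝ)
    (ℓ : ℝ → V →L[ℝ] ℝ) (ι : Z →L[ℝ] V) (t : ℝ) (z : Z) : Prop :=
  ∃ ξ ∈ subdiff R 0, ξ.comp ι + DI A DF ℓ ι t z = 0

/-- The local incremental minimization scheme with step size `τ`:
`z_{k+1}` minimizes `I(t_k, ·) + R(· − z_k)` over the ball `‖· − z_k‖_V ≤ τ`
and `t_{k+1} = min{t_k + τ − ‖z_{k+1} − z_k‖_V, T}`, starting from `t_0 = 0`, `z_0 = z₀`. -/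
def Scheme (A : Z →L[ℝ] Z →L[ℝ] ℝ) (F : Z → ℝ) (R : V → ℝ) (ℓ : ℝ → V →L[ℝ] ℝ)
    (ι : Z →L[ℝ] V) (T τ : ℝ) (z₀ : Z) (t : ℕ → ℝ) (z : ℕ → Z) : Prop :=
  t 0 = 0 ∧ z 0 = z₀ ∧
    ∀ k : ℕ,
      ‖ι (z (k + 1) - z k)‖ ≤ τ ∧
      (∀ w : Z, ‖ι (w - z k)‖ ≤ τ →
        energy A F ℓ ι (t k) (z (k + 1)) + R (ι (z (k + 1) - z k)) ≤
          energy A F ℓ ι (t k) w + R (ι (w - z k))) ∧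
      t (k + 1) = min (t k + τ - ‖ι (z (k + 1) - z k)‖) T

/-- Standing assumptions on the data of the rate-independent system. -/
def StandingAssumptions (ι : Z →L[ℝ] V) (ιX : V →L[ℝ] X)
    (A : Z →L[ℝ] Z →L[ℝ] ℝ) (α : ℝ) (F : Z → ℝ) (DF : Z → V →L[ℝ] ℝ)
    (D2F : Z → Z →L[ℝ] V →L[ℝ] ℝ) (R : V → ℝ) (ℓ : ℝ → V →L[ℝ] ℝ)
    (L T : ℝ) : Prop :=
  Function.Injective (ι : Z → V) ∧ DenseRange (ι : Z → V) ∧ (∀ w : Z, ‖ι w‖ ≤ ‖w‖) ∧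
  Function.Injective (ιX : V → X) ∧
  (∀ z w : Z, A z w = A w z) ∧ 0 < α ∧ (∀ w : Z, α * ‖w‖ ^ 2 ≤ A w w) ∧
  (∀ w : Z, 0 ≤ F w) ∧
  (∀ w : Z, HasFDerivAt F ((DF w).comp ι) w) ∧
  (∀ w : Z, HasFDerivAt DF (D2F w) w) ∧
  (∃ CF q : ℝ, 0 < CF ∧ 1 ≤ q ∧ ∀ w v : Z, ‖D2F w v‖ ≤ CF * (1 + ‖w‖ ^ q) * ‖v‖) ∧
  0 ≤ L ∧ LipschitzOnWith (Real.toNNReal L) ℓ (Set.Icc 0 T) ∧ 0 < T ∧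
  ConvexOn ℝ Set.univ R ∧ LowerSemicontinuous R ∧ (∀ v : V, 0 ≤ R v) ∧
  (∀ (c : ℝ) (v : V), 0 ≤ c → R (c • v) = c * R v) ∧
  (∃ ρ₁ ρ₂ : ℝ, 0 < ρ₁ ∧ 0 < ρ₂ ∧ ∀ v : V, ρ₁ * ‖ιX v‖ ≤ R v ∧ R v ≤ ρ₂ * ‖v‖)

/-- `κ`-uniform convexity of the energy: `⟨D²_zI(t,z)v,v⟩ ≥ κ‖v‖²_Z`, where
`D²_zI(t,z)[v,v] = ⟨Av,v⟩ + ⟨D²F(z)v, v⟩`. -/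
def UniformlyConvex (A : Z →L[ℝ] Z →L[ℝ] ℝ) (D2F : Z → Z →L[ℝ] V →L[ℝ] ℝ)
    (ι : Z →L[ℝ] V) (κ : ℝ) : Prop :=
  0 < κ ∧ ∀ w v : Z, κ * ‖v‖ ^ 2 ≤ A v v + D2F w v (ι v)

/-- A differential solution of the rate-independent system: `y ∈ W^{1,1}(0,T;Z)`,
`y(0) = z₀` and `0 ∈ ∂R(y'(t)) + D_zI(t, y(t))` for a.e. `t ∈ (0,T)`. -/
def IsDiffSol (A : Z →L[ℝ] Z →L[ℝ] ℝ) (DF : Z → V →L[ℝ] ℝ) (ℓ : ℝ → V →L[ℝ] ℝ)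
    (R : V → ℝ) (ι : Z →L[ℝ] V) (T : ℝ) (z₀ : Z) (y : ℝ → Z) : Prop :=
  y 0 = z₀ ∧
  ∃ y' : ℝ → Z,
    IntervalIntegrable y' volume 0 T ∧
    (∀ s ∈ Set.Icc (0 : ℝ) T, y s = z₀ + ∫ r in (0 : ℝ)..s, y' r) ∧
    (∀ᵐ s ∂(volume.restrict (Set.Ioo (0 : ℝ) T)),
      ∃ ξ ∈ subdiff R (ι (y' s)), ξ.comp ι + DI A DF ℓ ι s (y s) = 0)


/-!
Measure the defect of stability at `(t, z)` by the least `μ` with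
`-⟨D_zI(t,z), v⟩ ≤ R(v) + μ‖v‖_V` for all `v`; by Hahn–Banach, defect `0` is local stability.
Letting time pass from `t_{k-1}` to `t_k` raises the defect by at most `|ℓ|_Lip (t_k - t_{k-1})`,
hence from `0` to at most `|ℓ|_Lip τ`. If `z_{k+1}` is not stable at time `t_k`, the constraint
`‖z_{k+1} - z_k‖_V ≤ τ` is active, so time stands still, and monotonicity of `D_zI` along the
increment lowers the defect by `κ τ`. Starting from at most `|ℓ|_Lip τ`, this can happen at most
`⌈|ℓ|_Lip / κ⌉` times in a row.
-/

section Sublinear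

variable {E : Type*} [AddCommGroup E] [Module ℝ E]

lemma map_add_le_of_convexOn_of_homogeneous {R : E → ℝ} (hR : ConvexOn ℝ Set.univ R)
    (hhom : ∀ (c : ℝ) (v : E), 0 ≤ c → R (c • v) = c * R v) (a b : E) :
    R (a + b) ≤ R a + R b := by
  have hmid := hR.2 (Set.mem_univ a) (Set.mem_univ b) (by norm_num : (0 : ℝ) ≤ 1 / 2)
    (by norm_num : (0 : ℝ) ≤ 1 / 2) (by norm_num)
  rw [← smul_add, hhom _ _ (by norm_num)] at hmid
  simp only [smul_eq_mul] at hmid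
  linarith

lemma map_zero_of_homogeneous {R : E → ℝ}
    (hhom : ∀ (c : ℝ) (v : E), 0 ≤ c → R (c • v) = c * R v) : R 0 = 0 := by
  simpa using hhom 0 0 le_rfl

lemma exists_clm_comp_eq_of_le_sublinear {W : Type*} [SeminormedAddCommGroup W]
    [NormedSpace ℝ W] {R : W → ℝ} (hadd : ∀ a b, R (a + b) ≤ R a + R b)
    (hhom : ∀ (c : ℝ) (w : W), 0 ≤ c → R (c • w) = c * R w)
    {ρ : ℝ} (hρ : ∀ w, R w ≤ ρ * ‖w‖) {ι : E →ₗ[ℝ] W} {g : E →ₗ[ℝ] ℝ}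
    (hg : ∀ v, g v ≤ R (ι v)) :
    ∃ ξ : W →L[ℝ] ℝ, (∀ w, ξ w ≤ R w) ∧ ∀ v, ξ (ι v) = g v := by
  obtain ⟨σ, hσ⟩ := ι.rangeRestrict.exists_rightInverse_of_surjective ι.range_rangeRestrict
  have hισ (w : ι.range) : ι (σ w) = w := congrArg Subtype.val (LinearMap.congr_fun hσ w)
  obtain ⟨ξ, hξg, hξR⟩ := exists_extension_of_le_sublinear ⟨ι.range, g ∘ₗ σ⟩ R
    (fun c hc w => hhom c w hc.le) hadd (fun w => (hg (σ w)).trans_eq (by rw [hισ]))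
  have hξ_norm (w : W) : ‖ξ w‖ ≤ ρ * ‖w‖ := by
    have hneg := (hξR (-w)).trans (hρ (-w))
    rw [map_neg, norm_neg] at hneg
    exact abs_le.2 ⟨by linarith, (hξR w).trans (hρ w)⟩
  have hg_ker (v : E) (hv : ι v = 0) : g v = 0 := by
    have hR0 := map_zero_of_homogeneous hhom
    have hpos := hg v
    have hneg := hg (-v)
    rw [hv, hR0] at hpos
    rw [map_neg, map_neg, hv, neg_zero, hR0] at hneg
    linarith
  refine ⟨ξ.mkContinuous ρ hξ_norm, hξR, fun v => ?_⟩
  have hdiff := hg_ker (σ (ι.rangeRestrict v) - v) (by simp [hισ])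
  rw [map_sub, sub_eq_zero] at hdiff
  exact (hξg (ι.rangeRestrict v)).trans hdiff

lemma mul_le_mul_of_isMinOn_closedBall {p : Seminorm ℝ E} {h : E → ℝ} {τ : ℝ} (hτ : 0 < τ)
    (hhom : ∀ (c : ℝ) (v : E), 0 ≤ c → h (c • v) = c * h v)
    {d : E} (hmin : IsMinOn h (p.closedBall 0 τ) d) (v : E) : h d * p v ≤ τ * h v := by
  have hscale : ∀ c ∈ Set.Ioi (p v), h d * c ≤ τ * h v := by
    intro c hvc
    have hc : 0 < c := (apply_nonneg p v).trans_lt hvc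
    have hball : (τ / c) • v ∈ p.closedBall 0 τ := by
      rw [Seminorm.mem_closedBall_zero, map_smul_eq_mul, Real.norm_of_nonneg (by positivity),
        div_mul_eq_mul_div, div_le_iff₀ hc]
      exact mul_le_mul_of_nonneg_left (le_of_lt hvc) hτ.le
    have hle : h d ≤ h ((τ / c) • v) := hmin hball
    rwa [hhom _ _ (by positivity), div_mul_eq_mul_div, le_div_iff₀ hc] at hle
  exact le_of_tendsto (continuous_const_mul (h d)).continuousWithinAt
    (eventually_nhdsWithin_of_forall hscale)

lemma le_lineDeriv_add_of_isMinOn_add {C : Set E} {φ ψ : E → ℝ} {a : ℝ} {x y : E}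
    (hψ : ConvexOn ℝ C ψ) (hmin : IsMinOn (φ + ψ) C x) (hx : x ∈ C) (hy : y ∈ C)
    (hφ : HasLineDerivAt ℝ φ a x (y - x)) : ψ x ≤ a + ψ y := by
  suffices ψ x - ψ y ≤ a by linarith
  refine ge_of_tendsto hφ.tendsto_slope_zero_right ?_
  filter_upwards [Ioo_mem_nhdsGT (zero_lt_one (α := ℝ))] with s ⟨hs₀, hs₁⟩
  have hw : x + s • (y - x) ∈ C := hψ.1.add_smul_sub_mem hx hy ⟨hs₀.le, hs₁.le⟩
  have hle : φ x + ψ x ≤ φ (x + s • (y - x)) + ψ (x + s • (y - x)) := hmin hw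
  have hconv : ψ (x + s • (y - x)) ≤ (1 - s) * ψ x + s * ψ y := by
    have := hψ.2 hx hy (sub_nonneg.2 hs₁.le) hs₀.le (sub_add_cancel 1 s)
    rwa [show (1 - s) • x + s • y = x + s • (y - x) by module] at this
  rw [smul_eq_mul, inv_mul_eq_div, le_div_iff₀ hs₀]
  linarith

end Sublinear

lemma exists_le_ceil_of_forall_decrease {P : ℕ → ℝ → Prop} {Q : ℕ → Prop} {B δ : ℝ} (hδ : 0 < δ)
    (hbound : ∀ n, P n B) (hdecr : ∀ n μ, P n μ → ¬ Q n → P (n + 1) (μ - δ))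
    (hpos : ∀ n μ, μ ≤ 0 → P n μ → Q n) (n : ℕ) : ∃ j ≤ ⌈B / δ⌉₊, Q (n + j) := by
  by_contra! hQ
  have hrun : ∀ j ≤ ⌈B / δ⌉₊, P (n + j) (B - j * δ) := by
    intro j hj
    induction j with
    | zero => simpa using hbound n
    | succ j ih =>
      rw [Nat.cast_succ, add_one_mul, ← sub_sub]
      exact hdecr _ _ (ih (by lia)) (hQ j (by lia))
  have hceil : B ≤ ⌈B / δ⌉₊ * δ := (div_le_iff₀ hδ).1 (Nat.le_ceil _)
  exact hQ _ le_rfl (hpos _ _ (by linarith) (hrun _ le_rfl))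

section Stability

omit [CompleteSpace Z] [CompleteSpace V]

variable {ι : Z →L[ℝ] V} {A : Z →L[ℝ] Z →L[ℝ] ℝ} {F : Z → ℝ} {DF : Z → V →L[ℝ] ℝ}
  {D2F : Z → Z →L[ℝ] V →L[ℝ] ℝ} {R : V → ℝ} {ℓ : ℝ → V →L[ℝ] ℝ} {κ τ μ ν s t : ℝ}
  {z z₀ z₁ : Z}

/-- Local stability up to a defect `μ`: this is `dist_{V*}(-D_zI(t,z), ∂R(0)) ≤ μ`, written in
terms of the support function `R + μ‖·‖_V` of the `μ`-neighbourhood of `∂R(0)`. -/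
def StableUpTo (R : V → ℝ) (A : Z →L[ℝ] Z →L[ℝ] ℝ) (DF : Z → V →L[ℝ] ℝ)
    (ℓ : ℝ → V →L[ℝ] ℝ) (ι : Z →L[ℝ] V) (t : ℝ) (z : Z) (μ : ℝ) : Prop :=
  ∀ v : Z, -DI A DF ℓ ι t z v ≤ R (ι v) + μ * ‖ι v‖

lemma StableUpTo.mono (h : StableUpTo R A DF ℓ ι t z μ) (hμν : μ ≤ ν) :
    StableUpTo R A DF ℓ ι t z ν :=
  fun v => (h v).trans (by gcongr)

lemma StableUpTo.change_time (h : StableUpTo R A DF ℓ ι s z μ) :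
    StableUpTo R A DF ℓ ι t z (μ + ‖ℓ t - ℓ s‖) := by
  intro v
  have hload : (ℓ t - ℓ s) (ι v) ≤ ‖ℓ t - ℓ s‖ * ‖ι v‖ :=
    (le_abs_self _).trans ((ℓ t - ℓ s).le_opNorm (ι v))
  have hs := h v
  simp only [DI, sub_apply, add_apply, ContinuousLinearMap.comp_apply] at hs hload ⊢
  linarith

lemma LocStable.stableUpTo_zero (hhom : ∀ (c : ℝ) (v : V), 0 ≤ c → R (c • v) = c * R v)
    (h : LocStable R A DF ℓ ι t z) : StableUpTo R A DF ℓ ι t z 0 := by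
  obtain ⟨ξ, hξ, hsum⟩ := h
  intro v
  have hξv := hξ (ι v)
  rw [map_zero_of_homogeneous hhom, zero_add, sub_zero] at hξv
  have hsumv : ξ (ι v) + DI A DF ℓ ι t z v = 0 := DFunLike.congr_fun hsum v
  linarith

lemma StableUpTo.locStable (hR : ConvexOn ℝ Set.univ R)
    (hhom : ∀ (c : ℝ) (v : V), 0 ≤ c → R (c • v) = c * R v) {ρ : ℝ} (hρ : ∀ v, R v ≤ ρ * ‖v‖)
    (h : StableUpTo R A DF ℓ ι t z μ) (hμ : μ ≤ 0) : LocStable R A DF ℓ ι t z := by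
  obtain ⟨ξ, hξR, hξι⟩ := exists_clm_comp_eq_of_le_sublinear
    (map_add_le_of_convexOn_of_homogeneous hR hhom) hhom hρ (ι := (ι : Z →ₗ[ℝ] V))
    (g := -(DI A DF ℓ ι t z : Z →ₗ[ℝ] ℝ)) (fun v => by simpa using h.mono hμ v)
  refine ⟨ξ, fun v => ?_, ?_⟩
  · simpa [map_zero_of_homogeneous hhom] using hξR v
  · ext v
    exact add_eq_zero_iff_eq_neg.2 (hξι v)

lemma hasFDerivAt_energy (hsym : ∀ z w : Z, A z w = A w z)
    (hF : HasFDerivAt F ((DF z).comp ι) z) :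
    HasFDerivAt (energy A F ℓ ι t) (DI A DF ℓ ι t z) z := by
  have hquad : HasFDerivAt (fun w => (1 / 2 : ℝ) * A w w) (A z) z := by
    refine ((A.hasFDerivAt.clm_apply (hasFDerivAt_id z)).const_mul (1 / 2)).congr_fderiv ?_
    ext v
    simp only [one_div, ContinuousLinearMap.comp_id, id_eq, smul_add, add_apply, smul_apply,
      smul_eq_mul, ContinuousLinearMap.flip_apply, hsym v z]
    ring
  exact (hquad.add hF).sub ((ℓ t).comp ι).hasFDerivAt

lemma exists_DI_sub_DI_eq (hDF : ∀ w : Z, HasFDerivAt DF (D2F w) w) (z₀ z₁ v : Z) :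
    ∃ w : Z, DI A DF ℓ ι t z₁ v - DI A DF ℓ ι t z₀ v =
      A (z₁ - z₀) v + D2F w (z₁ - z₀) (ι v) := by
  have hderiv (w : Z) :
      HasFDerivAt (fun z => DI A DF ℓ ι t z v) (A.flip v + (D2F w).flip (ι v)) w := by
    have hA := (A.flip v).hasFDerivAt (x := w)
    have hDFv := (hDF w).clm_apply (hasFDerivAt_const (ι v) w)
    exact ((hA.add hDFv).sub_const (ℓ t (ι v))).congr_fderiv (by simp)
  obtain ⟨w, -, hw⟩ := domain_mvt (fun w _ => (hderiv w).hasFDerivWithinAt) convex_univ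
    (Set.mem_univ z₀) (Set.mem_univ z₁)
  exact ⟨w, hw⟩

lemma UniformlyConvex.le_DI_sub_DI (hconv : UniformlyConvex A D2F ι κ)
    (hι : ∀ w : Z, ‖ι w‖ ≤ ‖w‖) (hDF : ∀ w : Z, HasFDerivAt DF (D2F w) w) (z₀ z₁ : Z) :
    κ * ‖ι (z₁ - z₀)‖ ^ 2 ≤
      DI A DF ℓ ι t z₁ (z₁ - z₀) - DI A DF ℓ ι t z₀ (z₁ - z₀) := by
  obtain ⟨w, hw⟩ := exists_DI_sub_DI_eq (A := A) (ℓ := ℓ) (ι := ι) (t := t) hDF z₀ z₁ (z₁ - z₀)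
  calc κ * ‖ι (z₁ - z₀)‖ ^ 2 ≤ κ * ‖z₁ - z₀‖ ^ 2 := by
        have := hconv.1.le
        gcongr
        exact hι _
    _ ≤ A (z₁ - z₀) (z₁ - z₀) + D2F w (z₁ - z₀) (ι (z₁ - z₀)) := hconv.2 w _
    _ = _ := hw.symm

/-- `z₁` solves the local incremental minimization problem of the scheme that starts from `z₀`,
with the load frozen at time `t`. -/
def IsLocalMinimizer (A : Z →L[ℝ] Z →L[ℝ] ℝ) (F : Z → ℝ) (R : V → ℝ) (ℓ : ℝ → V →L[ℝ] ℝ)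
    (ι : Z →L[ℝ] V) (τ t : ℝ) (z₀ z₁ : Z) : Prop :=
  ‖ι (z₁ - z₀)‖ ≤ τ ∧ ∀ w : Z, ‖ι (w - z₀)‖ ≤ τ →
    energy A F ℓ ι t z₁ + R (ι (z₁ - z₀)) ≤ energy A F ℓ ι t w + R (ι (w - z₀))

lemma IsLocalMinimizer.isMinOn_DI_add (h : IsLocalMinimizer A F R ℓ ι τ t z₀ z₁)
    (hR : ConvexOn ℝ Set.univ R) (hsym : ∀ z w : Z, A z w = A w z)
    (hF : HasFDerivAt F ((DF z₁).comp ι) z₁) :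
    IsMinOn (fun v => DI A DF ℓ ι t z₁ v + R (ι v))
      (((normSeminorm ℝ V).comp (ι : Z →ₗ[ℝ] V)).closedBall 0 τ) (z₁ - z₀) := by
  set ball := ((normSeminorm ℝ V).comp (ι : Z →ₗ[ℝ] V)).closedBall 0 τ
  have mem_ball {v : Z} : v ∈ ball ↔ ‖ι v‖ ≤ τ := Seminorm.mem_closedBall_zero _
  intro v hv
  have hψ : ConvexOn ℝ ball (R ∘ ι) :=
    (hR.comp_linearMap (ι : Z →ₗ[ℝ] V)).subset (Set.subset_univ _) (Seminorm.convex_closedBall ..)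
  have hmin : IsMinOn ((fun d => energy A F ℓ ι t (z₀ + d)) + R ∘ ι) ball (z₁ - z₀) := by
    intro d hd
    simpa using h.2 (z₀ + d) (by simpa using mem_ball.1 hd)
  have hφ : HasFDerivAt (fun d => energy A F ℓ ι t (z₀ + d)) (DI A DF ℓ ι t z₁) (z₁ - z₀) := by
    rw [hasFDerivAt_comp_add_left, add_sub_cancel]
    exact hasFDerivAt_energy hsym hF
  have hvar := le_lineDeriv_add_of_isMinOn_add hψ hmin (mem_ball.2 h.1) hv (hφ.hasLineDerivAt _)
  rw [map_sub] at hvar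
  suffices DI A DF ℓ ι t z₁ (z₁ - z₀) + R (ι (z₁ - z₀)) ≤ DI A DF ℓ ι t z₁ v + R (ι v) from this
  change R (ι (z₁ - z₀)) ≤ _ - _ + R (ι v) at hvar
  linarith

lemma IsLocalMinimizer.mul_norm_le_mul_DI_add (h : IsLocalMinimizer A F R ℓ ι τ t z₀ z₁)
    (hτ : 0 < τ) (hR : ConvexOn ℝ Set.univ R)
    (hhom : ∀ (c : ℝ) (v : V), 0 ≤ c → R (c • v) = c * R v)
    (hsym : ∀ z w : Z, A z w = A w z) (hF : HasFDerivAt F ((DF z₁).comp ι) z₁) (v : Z) :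
    (DI A DF ℓ ι t z₁ (z₁ - z₀) + R (ι (z₁ - z₀))) * ‖ι v‖ ≤
      τ * (DI A DF ℓ ι t z₁ v + R (ι v)) := by
  refine mul_le_mul_of_isMinOn_closedBall hτ (fun c w hc => ?_) (h.isMinOn_DI_add hR hsym hF) v
  rw [map_smul, map_smul, hhom c _ hc, smul_eq_mul, mul_add]

lemma IsLocalMinimizer.norm_eq_and_stableUpTo_sub (h : IsLocalMinimizer A F R ℓ ι τ t z₀ z₁)
    (hτ : 0 < τ) (hR : ConvexOn ℝ Set.univ R)
    (hhom : ∀ (c : ℝ) (v : V), 0 ≤ c → R (c • v) = c * R v)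
    (hsym : ∀ z w : Z, A z w = A w z) (hF : HasFDerivAt F ((DF z₁).comp ι) z₁)
    (hmono : κ * ‖ι (z₁ - z₀)‖ ^ 2 ≤
      DI A DF ℓ ι t z₁ (z₁ - z₀) - DI A DF ℓ ι t z₀ (z₁ - z₀))
    (hμ : StableUpTo R A DF ℓ ι t z₀ μ) (hunstable : ¬ StableUpTo R A DF ℓ ι t z₁ 0) :
    ‖ι (z₁ - z₀)‖ = τ ∧ StableUpTo R A DF ℓ ι t z₁ (μ - κ * τ) := by
  have hvar := h.mul_norm_le_mul_DI_add hτ hR hhom hsym hF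
  have hμd := hμ (z₁ - z₀)
  set G := DI A DF ℓ ι t z₁ (z₁ - z₀) + R (ι (z₁ - z₀)) with hG
  have hG_neg : G < 0 := by
    by_contra! hG_nonneg
    refine hunstable fun v => ?_
    have := nonneg_of_mul_nonneg_right ((mul_nonneg hG_nonneg (norm_nonneg _)).trans (hvar v)) hτ
    linarith
  have hnorm : ‖ι (z₁ - z₀)‖ = τ := by
    refine h.1.antisymm ((mul_le_mul_left_of_neg hG_neg).1 ?_)
    exact (hvar (z₁ - z₀)).trans_eq (mul_comm τ G)
  refine ⟨hnorm, fun v => ?_⟩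
  rw [hnorm] at hmono hμd
  have hG_ge : -((μ - κ * τ) * τ) ≤ G := by linarith
  have hle := (mul_le_mul_of_nonneg_right hG_ge (norm_nonneg (ι v))).trans (hvar v)
  refine le_of_mul_le_mul_left ?_ hτ
  linarith

end Stability

namespace Scheme

omit [CompleteSpace Z] [CompleteSpace V]

variable {ι : Z →L[ℝ] V} {A : Z →L[ℝ] Z →L[ℝ] ℝ} {F : Z → ℝ} {DF : Z → V →L[ℝ] ℝ}
  {R : V → ℝ} {ℓ : ℝ → V →L[ℝ] ℝ} {K : ℝ≥0} {T κ τ μ δ ρ : ℝ}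
  {z₀ : Z} {t : ℕ → ℝ} {z : ℕ → Z} {n : ℕ}

lemma isLocalMinimizer (h : Scheme A F R ℓ ι T τ z₀ t z) (n : ℕ) :
    IsLocalMinimizer A F R ℓ ι τ (t n) (z n) (z (n + 1)) :=
  ⟨(h.2.2 n).1, (h.2.2 n).2.1⟩

lemma time_le (h : Scheme A F R ℓ ι T τ z₀ t z) (hT : 0 ≤ T) (n : ℕ) : t n ≤ T := by
  cases n with
  | zero => exact h.1.trans_le hT
  | succ n => exact (h.2.2 n).2.2.trans_le (min_le_right _ _)

lemma monotone_time (h : Scheme A F R ℓ ι T τ z₀ t z) (hT : 0 ≤ T) : Monotone t := by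
  refine monotone_nat_of_le_succ fun n => ?_
  rw [(h.2.2 n).2.2]
  exact le_min (by linarith [(h.2.2 n).1]) (h.time_le hT n)

lemma time_mem_Icc (h : Scheme A F R ℓ ι T τ z₀ t z) (hT : 0 ≤ T) (n : ℕ) :
    t n ∈ Set.Icc 0 T :=
  ⟨h.1.symm.trans_le (h.monotone_time hT n.zero_le), h.time_le hT n⟩

lemma time_succ_sub_le (h : Scheme A F R ℓ ι T τ z₀ t z) (n : ℕ) : t (n + 1) - t n ≤ τ := by
  have := (h.2.2 n).2.2.trans_le (min_le_left _ _)
  linarith [norm_nonneg (ι (z (n + 1) - z n))]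

lemma time_succ_eq (h : Scheme A F R ℓ ι T τ z₀ t z) (hT : 0 ≤ T)
    (hn : ‖ι (z (n + 1) - z n)‖ = τ) : t (n + 1) = t n := by
  rw [(h.2.2 n).2.2, hn, add_sub_cancel_right]
  exact min_eq_left (h.time_le hT n)

lemma norm_load_succ_sub_le (h : Scheme A F R ℓ ι T τ z₀ t z) (hT : 0 ≤ T)
    (hℓ : LipschitzOnWith K ℓ (Set.Icc 0 T)) (n : ℕ) :
    ‖ℓ (t (n + 1)) - ℓ (t n)‖ ≤ K * τ := by
  calc ‖ℓ (t (n + 1)) - ℓ (t n)‖ ≤ K * ‖t (n + 1) - t n‖ :=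
        hℓ.norm_sub_le (h.time_mem_Icc hT _) (h.time_mem_Icc hT _)
    _ = K * (t (n + 1) - t n) := by
        rw [Real.norm_of_nonneg (sub_nonneg.2 (h.monotone_time hT n.le_succ))]
    _ ≤ K * τ := by gcongr; exact h.time_succ_sub_le n

lemma stableUpTo_of_not_locStable (h : Scheme A F R ℓ ι T τ z₀ t z) (hτ : 0 < τ)
    (hT : 0 ≤ T) (hR : ConvexOn ℝ Set.univ R)
    (hhom : ∀ (c : ℝ) (v : V), 0 ≤ c → R (c • v) = c * R v) (hρ : ∀ v, R v ≤ ρ * ‖v‖)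
    (hsym : ∀ z w : Z, A z w = A w z) (hF : ∀ w : Z, HasFDerivAt F ((DF w).comp ι) w)
    (hmono : ∀ s z₀ z₁, κ * ‖ι (z₁ - z₀)‖ ^ 2 ≤
      DI A DF ℓ ι s z₁ (z₁ - z₀) - DI A DF ℓ ι s z₀ (z₁ - z₀))
    (hμ : StableUpTo R A DF ℓ ι (t n) (z n) μ)
    (hn : ¬ LocStable R A DF ℓ ι (t n) (z (n + 1))) :
    t (n + 1) = t n ∧ StableUpTo R A DF ℓ ι (t n) (z (n + 1)) (μ - κ * τ) :=
  ((h.isLocalMinimizer n).norm_eq_and_stableUpTo_sub hτ hR hhom hsym (hF _) (hmono _ _ _) hμ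
    fun h₀ => hn (h₀.locStable hR hhom hρ le_rfl)).imp_left (h.time_succ_eq hT)

lemma stableUpTo_mul_of_forall_decrease (h : Scheme A F R ℓ ι T τ z₀ t z) (hT : 0 ≤ T)
    (hhom : ∀ (c : ℝ) (v : V), 0 ≤ c → R (c • v) = c * R v)
    (hℓ : LipschitzOnWith K ℓ (Set.Icc 0 T)) (hz₀ : LocStable R A DF ℓ ι 0 z₀) (hδ : 0 ≤ δ)
    (hdecr : ∀ n μ, StableUpTo R A DF ℓ ι (t n) (z n) μ →
      ¬ LocStable R A DF ℓ ι (t n) (z (n + 1)) →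
      StableUpTo R A DF ℓ ι (t (n + 1)) (z (n + 1)) (μ - δ)) (n : ℕ) :
    StableUpTo R A DF ℓ ι (t n) (z n) (K * τ) := by
  induction n with
  | zero =>
    have hτ : 0 ≤ τ := (norm_nonneg _).trans (h.2.2 0).1
    rw [h.1, h.2.1]
    exact (hz₀.stableUpTo_zero hhom).mono (by positivity)
  | succ n ih =>
    by_cases hn : LocStable R A DF ℓ ι (t n) (z (n + 1))
    · exact (hn.stableUpTo_zero hhom).change_time.mono
        ((zero_add _).trans_le (h.norm_load_succ_sub_le hT hℓ n))
    · exact (hdecr n _ ih hn).mono (sub_le_self _ hδ)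

end Scheme

omit [CompleteSpace Z] [CompleteSpace V] in
theorem statement8_general {ι : Z →L[ℝ] V} {A : Z →L[ℝ] Z →L[ℝ] ℝ} {F : Z → ℝ}
    {DF : Z → V →L[ℝ] ℝ} {R : V → ℝ} {ℓ : ℝ → V →L[ℝ] ℝ} {K : ℝ≥0} {T ρ κ τ : ℝ}
    {z₀ : Z} {t : ℕ → ℝ} {z : ℕ → Z} (h : Scheme A F R ℓ ι T τ z₀ t z)
    (hτ : 0 < τ) (hT : 0 ≤ T) (hR : ConvexOn ℝ Set.univ R)
    (hhom : ∀ (c : ℝ) (v : V), 0 ≤ c → R (c • v) = c * R v) (hρ : ∀ v, R v ≤ ρ * ‖v‖)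
    (hsym : ∀ z w : Z, A z w = A w z) (hF : ∀ w : Z, HasFDerivAt F ((DF w).comp ι) w)
    (hκ : 0 < κ) (hmono : ∀ s z₀ z₁, κ * ‖ι (z₁ - z₀)‖ ^ 2 ≤
      DI A DF ℓ ι s z₁ (z₁ - z₀) - DI A DF ℓ ι s z₀ (z₁ - z₀))
    (hℓ : LipschitzOnWith K ℓ (Set.Icc 0 T)) (hz₀ : LocStable R A DF ℓ ι 0 z₀) (k : ℕ) :
    ∃ khat : ℕ, k ≤ khat ∧ khat ≤ k + (⌈K / κ⌉₊ + 1) ∧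
      1 ≤ khat ∧ LocStable R A DF ℓ ι (t (khat - 1)) (z khat) := by
  have hδ : 0 < κ * τ := mul_pos hκ hτ
  have hstep {n : ℕ} {μ : ℝ} := h.stableUpTo_of_not_locStable (n := n) (μ := μ) hτ hT hR hhom hρ
    hsym hF hmono
  have hdecr : ∀ n μ, StableUpTo R A DF ℓ ι (t n) (z n) μ →
      ¬ LocStable R A DF ℓ ι (t n) (z (n + 1)) →
      StableUpTo R A DF ℓ ι (t (n + 1)) (z (n + 1)) (μ - κ * τ) := by
    intro n μ hμ hn
    obtain ⟨htime, hstable⟩ := hstep hμ hn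
    rwa [htime]
  have hbound := h.stableUpTo_mul_of_forall_decrease hT hhom hℓ hz₀ hδ.le hdecr
  have hpos : ∀ n μ, μ ≤ 0 → StableUpTo R A DF ℓ ι (t n) (z n) μ →
      LocStable R A DF ℓ ι (t n) (z (n + 1)) := by
    intro n μ hμ_nonpos hμ
    by_contra hn
    exact hn ((hstep hμ hn).2.locStable hR hhom hρ (by linarith))
  obtain ⟨j, hj, hstable⟩ := exists_le_ceil_of_forall_decrease hδ hbound hdecr hpos (k - 1)
  rw [mul_div_mul_right _ _ hτ.ne'] at hj
  exact ⟨k - 1 + j + 1, by lia, by lia, by lia, hstable⟩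

/-- Lemma 3.11: under `κ`-uniform convexity there exists
`m ∈ ℕ` independent of `τ` (one may take `m = ⌈|ℓ|_Lip/κ⌉ + 1`) such that for every
iteration index `k < N̂(τ)` there is an index `k̂ ∈ [k, k+m]` with
`0 ∈ ∂R(0) + D_zI(t_{k̂−1}, z_{k̂})`, i.e. after at most `m` iterations the iterate
is again locally stable. -/
theorem statement8
    (ι : Z →L[ℝ] V) (ιX : V →L[ℝ] X)
    (A : Z →L[ℝ] Z →L[ℝ] ℝ) (α : ℝ) (F : Z → ℝ) (DF : Z → V →L[ℝ] ℝ)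
    (D2F : Z → Z →L[ℝ] V →L[ℝ] ℝ) (R : V → ℝ) (ℓ : ℝ → V →L[ℝ] ℝ) (L T : ℝ)
    (hstand : StandingAssumptions ι ιX A α F DF D2F R ℓ L T)
    (κ : ℝ) (hconv : UniformlyConvex A D2F ι κ)
    (τ : ℝ) (hτ : 0 < τ) (z₀ : Z) (hz₀ : LocStable R A DF ℓ ι 0 z₀)
    (t : ℕ → ℝ) (z : ℕ → Z) (hscheme : Scheme A F R ℓ ι T τ z₀ t z)
    (N : ℕ) (hN : t N = T) (hNfirst : ∀ j : ℕ, j < N → t j < T)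
    (Nhat : ℕ) (hNhat1 : N ≤ Nhat) (hNhat2 : 1 ≤ Nhat)
    (hNhatStable : LocStable R A DF ℓ ι (t (Nhat - 1)) (z Nhat))
    (hNhatFirst : ∀ j : ℕ, N ≤ j → 1 ≤ j → j < Nhat →
      ¬ LocStable R A DF ℓ ι (t (j - 1)) (z j)) :
    ∀ k : ℕ, k < Nhat → ∃ khat : ℕ, k ≤ khat ∧ khat ≤ k + (⌈L / κ⌉₊ + 1) ∧
      1 ≤ khat ∧ LocStable R A DF ℓ ι (t (khat - 1)) (z khat) := by
  obtain ⟨-, -, hι, -, hsym, -, -, -, hF, hDF, -, hL, hℓ, hT, hR, -, -, hhom, _, ρ, -, -, hρ⟩ :=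
    hstand
  intro k _
  simpa only [Real.coe_toNNReal L hL] using statement8_general hscheme hτ hT.le hR hhom
    (fun v => (hρ v).2) hsym hF hconv.1 (fun _ => hconv.le_DI_sub_DI hι hDF) hℓ hz₀ k

end RIS
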